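/- arXiv:2310.09845 — 2 statements merged into one kernel-verified Lean document; each statement's English description precedes it below -/
import Mathlib

section
/- Let n ≤ m be positive integers, x̂ ∈ ℝᵐ, δ > 0, and let F : x̂ + B_m(δ) → ℝⁿ be a continuous function that is differentiable at x̂. If the differential dF(x̂) : ℝᵐ → ℝⁿ is surjective, then there exists r > 0 such that F(x̂ + B_m(δ)) ⊇ F(x̂) + B_n(r). -/
open Set Metric

/-!
Precomposing with a right inverse of the differential reduces to a map `f` of a finite-dimensional
space to itself with derivative the identity at `a`. Then `x ↦ x - (f x - y)` maps a small closed
ball around `a` to itself for every `y` near `f a`, and a fixed point given by Brouwer's theorem is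
a solution of `f x = y`.

For Brouwer's theorem (after Milnor and Rogers), suppose that `f` is a `C¹` retraction onto the
boundary sphere of a ball `B`, and let `g = f - id`. For large `t` the map `t id + g` is a bijection
of `B` onto `t B`, so that `∫_B det (t + g') = t ^ n vol B`. Both sides are polynomials in `t`, so
they agree at `t = 1`, where `det (1 + g') = det f' = 0` because `f` has constant norm. A continuous
map without fixed points yields such a retraction after smoothing.
-/

open Filter Function MeasureTheory Module Polynomial Topology
open scoped NNReal

lemma nonempty_inter_frontier_of_isPreconnected {X : Type*} [TopologicalSpace X] {s t : Set X}
    (ht : IsPreconnected t) (hts : (t ∩ s).Nonempty) (htsc : (t ∩ sᶜ).Nonempty) :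
    (t ∩ frontier s).Nonempty := by
  by_contra hempty
  have hcover : t ⊆ interior s ∪ interior sᶜ := fun x hx ↦ by
    rw [interior_compl]
    by_contra hxs
    simp only [mem_union, mem_compl_iff, not_or, not_not] at hxs
    exact hempty ⟨x, hx, hxs.2, hxs.1⟩
  have hdisj : Disjoint (interior s) (interior sᶜ) :=
    disjoint_compl_right.mono interior_subset interior_subset
  rcases ht.subset_or_subset isOpen_interior isOpen_interior hdisj hcover with h | h
  · obtain ⟨x, hxt, hxs⟩ := htsc
    exact hxs (interior_subset (h hxt))
  · obtain ⟨x, hxt, hxs⟩ := hts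
    exact interior_subset (h hxt) hxs

section Lipschitz

variable {E : Type*} [NormedAddCommGroup E]

lemma lipschitzWith_indicator_of_eq_zero_on_frontier [NormedSpace ℝ E] {F : Type*}
    [SeminormedAddCommGroup F] {s : Set E} {g : E → F} {K : ℝ≥0} (hs : IsClosed s)
    (hg : LipschitzOnWith K g s) (hg₀ : ∀ x ∈ frontier s, g x = 0) :
    LipschitzWith K (s.indicator g) := by
  have hcross : ∀ x ∈ s, ∀ y ∉ s, dist (g x) 0 ≤ K * dist x y := by
    intro x hx y hy
    obtain ⟨z, hz, hzs⟩ := nonempty_inter_frontier_of_isPreconnected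
      (convex_segment (𝕜 := ℝ) x y).isPreconnected
      ⟨x, left_mem_segment ℝ x y, hx⟩ ⟨y, right_mem_segment ℝ x y, hy⟩
    calc dist (g x) 0 = dist (g x) (g z) := by rw [hg₀ z hzs]
      _ ≤ K * dist x z := hg.dist_le_mul x hx z (hs.frontier_subset hzs)
      _ ≤ K * dist x y := by
        gcongr
        linarith [dist_add_dist_of_mem_segment hz, dist_nonneg (x := z) (y := y)]
  refine LipschitzWith.of_dist_le_mul fun x y ↦ ?_
  by_cases hx : x ∈ s <;> by_cases hy : y ∈ s
  · simpa only [indicator_of_mem, hx, hy] using hg.dist_le_mul x hx y hy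
  · simpa only [indicator_of_mem hx, indicator_of_notMem hy] using hcross x hx y hy
  · simpa only [indicator_of_notMem hx, indicator_of_mem hy, dist_comm] using hcross y hy x hx
  · simp only [indicator_of_notMem hx, indicator_of_notMem hy, dist_self]
    positivity

lemma bijective_id_add_of_lipschitzWith_lt_one [CompleteSpace E] {g : E → E} {K : ℝ≥0}
    (hg : LipschitzWith K g) (hK : K < 1) : Bijective fun x ↦ x + g x := by
  refine (bijective_iff_existsUnique _).2 fun y ↦ ?_
  have hcontr : ContractingWith K fun x ↦ y - g x :=
    ⟨hK, LipschitzWith.of_dist_le_mul fun a b ↦ by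
      rw [dist_sub_left]
      exact hg.dist_le_mul a b⟩
  have hfixed : ∀ x, IsFixedPt (fun x ↦ y - g x) x ↔ x + g x = y := fun x ↦ by
    rw [IsFixedPt, sub_eq_iff_eq_add, eq_comm]
  exact ⟨hcontr.fixedPoint, (hfixed _).1 hcontr.fixedPoint_isFixedPt,
    fun x hx ↦ hcontr.fixedPoint_unique ((hfixed x).2 hx)⟩

end Lipschitz

lemma image_eq_self_of_bijective_of_eqOn_compl {α : Type*} {f : α → α} {s : Set α}
    (hf : Bijective f) (hid : EqOn f id sᶜ) : f '' s = s := by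
  rw [← compl_inj_iff, ← image_compl_eq hf, hid.image_eq, image_id]

section Determinant

variable {E : Type*} [NormedAddCommGroup E] [NormedSpace ℝ E]

lemma det_ne_zero_of_isUnit {A : E →L[ℝ] E} (hA : IsUnit A) : A.det ≠ 0 :=
  ((hA.map ContinuousLinearMap.toLinearMapRingHom).map LinearMap.det).ne_zero

lemma det_id_add_pos_of_norm_lt_one [CompleteSpace E] {A : E →L[ℝ] E} (hA : ‖A‖ < 1) :
    0 < (.id ℝ E + A : E →L[ℝ] E).det := by
  by_contra! hneg
  have hcont : Continuous fun B : E →L[ℝ] E ↦ (.id ℝ E + B : E →L[ℝ] E).det :=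
    ContinuousLinearMap.continuous_det.comp (continuous_const.add continuous_id)
  have hzero : 0 ≤ (.id ℝ E + 0 : E →L[ℝ] E).det := by simp [ContinuousLinearMap.det]
  obtain ⟨B, hB, hdet⟩ := (convex_ball (0 : E →L[ℝ] E) 1).isPreconnected.intermediate_value
    (mem_ball_zero_iff.2 hA) (mem_ball_self one_pos) hcont.continuousOn ⟨hneg, hzero⟩
  have hunit : IsUnit (1 - -B) := isUnit_one_sub_of_norm_lt_one (by simpa using hB)
  rw [sub_neg_eq_add] at hunit
  exact det_ne_zero_of_isUnit hunit hdet

lemma eval_charpoly_neg [FiniteDimensional ℝ E] (A : E →L[ℝ] E) (t : ℝ) :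
    (-(A : E →ₗ[ℝ] E)).charpoly.eval t = (t • .id ℝ E + A : E →L[ℝ] E).det := by
  rw [LinearMap.eval_charpoly, sub_neg_eq_add, Algebra.algebraMap_eq_smul_one]
  rfl

end Determinant

lemma exists_polynomial_eval_eq_integral {𝕜 α : Type*} [RCLike 𝕜] [MeasurableSpace α]
    {μ : Measure α} {p : α → 𝕜[X]} {d : ℕ} (hdeg : ∀ x, (p x).natDegree ≤ d)
    (hint : ∀ t, Integrable (fun x ↦ (p x).eval t) μ) :
    ∃ q : 𝕜[X], ∀ t, ∫ x, (p x).eval t ∂μ = q.eval t := by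
  let nodes := Finset.range (d + 1)
  let v : ℕ → 𝕜 := Nat.cast
  have hinterp : ∀ x t, (p x).eval t =
      ∑ i ∈ nodes, (p x).eval (v i) * (Lagrange.basis nodes v i).eval t := by
    intro x t
    have hdeg' : (p x).degree < nodes.card := by
      rw [Finset.card_range]
      exact degree_le_natDegree.trans_lt (by exact_mod_cast Nat.lt_succ_of_le (hdeg x))
    conv_lhs => rw [Lagrange.eq_interpolate Nat.cast_injective.injOn hdeg']
    simp only [Lagrange.interpolate_apply, eval_finsetSum, eval_mul, eval_C, v]
  refine ⟨Lagrange.interpolate nodes v fun i ↦ ∫ x, (p x).eval (v i) ∂μ, fun t ↦ ?_⟩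
  simp only [hinterp _ t, Lagrange.interpolate_apply, eval_finsetSum, eval_mul, eval_C]
  rw [integral_finsetSum _ fun i _ ↦ (hint _).mul_const _]
  simp only [integral_mul_const]

section ChangeOfVariables

variable {E : Type*} [NormedAddCommGroup E] [NormedSpace ℝ E] [FiniteDimensional ℝ E]
  [MeasurableSpace E] [BorelSpace E] (μ : Measure E) [μ.IsAddHaarMeasure] {s : Set E} {g : E → E}

theorem setIntegral_det_id_add_of_nnnorm_le {g' : E → E →L[ℝ] E} {K : ℝ≥0} (hs : IsClosed s)
    (hconv : Convex ℝ s) (hg : ∀ x ∈ s, HasFDerivWithinAt g (g' x) s x)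
    (hg₀ : ∀ x ∈ frontier s, g x = 0) (hg' : ∀ x ∈ s, ‖g' x‖₊ ≤ K) (hK : K < 1) :
    ∫ x in s, (.id ℝ E + g' x : E →L[ℝ] E).det ∂μ = μ.real s := by
  have : CompleteSpace E := FiniteDimensional.complete ℝ E
  let Φ : E → E := fun x ↦ x + s.indicator g x
  have hbij : Bijective Φ := bijective_id_add_of_lipschitzWith_lt_one
    (lipschitzWith_indicator_of_eq_zero_on_frontier hs
      (hconv.lipschitzOnWith_of_nnnorm_hasFDerivWithin_le hg hg') hg₀) hK
  have himage : Φ '' s = s := image_eq_self_of_bijective_of_eqOn_compl hbij fun x hx ↦ by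
    simp only [Φ, indicator_of_notMem hx, add_zero, id]
  have hderiv : ∀ x ∈ s, HasFDerivWithinAt Φ (.id ℝ E + g' x) s x := fun x hx ↦
    (hasFDerivWithinAt_id x s).add
      ((hg x hx).congr (eqOn_indicator (f := g)) (indicator_of_mem hx g))
  have hpos : ∀ x ∈ s, 0 < (.id ℝ E + g' x : E →L[ℝ] E).det := fun x hx ↦
    det_id_add_pos_of_norm_lt_one ((hg' x hx).trans_lt hK)
  calc ∫ x in s, (.id ℝ E + g' x : E →L[ℝ] E).det ∂μ
      = ∫ x in s, |(.id ℝ E + g' x : E →L[ℝ] E).det| • (1 : ℝ) ∂μ :=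
        setIntegral_congr_fun hs.measurableSet fun x hx ↦ by
          simp only [abs_of_pos (hpos x hx), smul_eq_mul, mul_one]
    _ = ∫ _ in Φ '' s, (1 : ℝ) ∂μ :=
        (integral_image_eq_integral_abs_det_fderiv_smul μ hs.measurableSet hderiv
          hbij.injective.injOn fun _ ↦ (1 : ℝ)).symm
    _ = μ.real s := by rw [himage, setIntegral_const, smul_eq_mul, mul_one]

lemma setIntegral_det_smul_id_add_of_nnnorm_le {g' : E → E →L[ℝ] E} {K : ℝ≥0} {t : ℝ}
    (hs : IsClosed s) (hconv : Convex ℝ s) (hg : ∀ x ∈ s, HasFDerivWithinAt g (g' x) s x)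
    (hg₀ : ∀ x ∈ frontier s, g x = 0) (hg' : ∀ x ∈ s, ‖g' x‖₊ ≤ K) (ht : K < t) :
    ∫ x in s, (t • .id ℝ E + g' x : E →L[ℝ] E).det ∂μ = t ^ finrank ℝ E * μ.real s := by
  have ht₀ : 0 < t := K.coe_nonneg.trans_lt ht
  have hdet : ∀ x, (t • .id ℝ E + g' x : E →L[ℝ] E).det =
      t ^ finrank ℝ E * (.id ℝ E + t⁻¹ • g' x : E →L[ℝ] E).det := fun x ↦ by
    rw [ContinuousLinearMap.det, ContinuousLinearMap.det, ← LinearMap.det_smul,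
      ← ContinuousLinearMap.toLinearMap_smul, smul_add, smul_inv_smul₀ ht₀.ne']
  have hle : ∀ x ∈ s, ‖t⁻¹ • g' x‖₊ ≤ ‖t‖₊⁻¹ * K := fun x hx ↦ by
    rw [nnnorm_smul, nnnorm_inv]
    gcongr
    exact hg' x hx
  have hlt : ‖t‖₊⁻¹ * K < 1 := by
    rw [inv_mul_lt_one₀ (nnnorm_pos.2 ht₀.ne'), ← NNReal.coe_lt_coe, coe_nnnorm]
    exact ht.trans_le (Real.le_norm_self t)
  simp only [hdet, integral_const_mul]
  rw [setIntegral_det_id_add_of_nnnorm_le μ (g := t⁻¹ • g) (K := ‖t‖₊⁻¹ * K) hs hconv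
    (fun x hx ↦ (hg x hx).const_smul t⁻¹) (fun x hx ↦ by simp [hg₀ x hx]) hle hlt]

theorem setIntegral_det_id_add_fderiv_of_eq_zero_on_frontier (hs : IsCompact s)
    (hconv : Convex ℝ s) (hg : ContDiff ℝ 1 g) (hg₀ : ∀ x ∈ frontier s, g x = 0) :
    ∫ x in s, (.id ℝ E + fderiv ℝ g x : E →L[ℝ] E).det ∂μ = μ.real s := by
  have hcont : Continuous (fderiv ℝ g) := hg.continuous_fderiv one_ne_zero
  have hderiv : ∀ x ∈ s, HasFDerivWithinAt g (fderiv ℝ g x) s x := fun x _ ↦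
    (hg.differentiable one_ne_zero x).hasFDerivAt.hasFDerivWithinAt
  obtain ⟨K, hK⟩ := (hs.image hcont.nnnorm).bddAbove
  have hint : ∀ t : ℝ, IntegrableOn
      (fun x ↦ (-(fderiv ℝ g x : E →ₗ[ℝ] E)).charpoly.eval t) s μ := fun t ↦ by
    simp only [eval_charpoly_neg]
    exact (ContinuousLinearMap.continuous_det.comp
      (continuous_const.add hcont)).continuousOn.integrableOn_compact hs
  obtain ⟨q, hq⟩ := exists_polynomial_eval_eq_integral
    (fun x ↦ (LinearMap.charpoly_natDegree _).le) hint
  simp only [eval_charpoly_neg] at hq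
  have hlarge : ∀ t ∈ Ioi (K : ℝ), q.eval t = (X ^ finrank ℝ E * C (μ.real s)).eval t := by
    intro t ht
    rw [← hq, setIntegral_det_smul_id_add_of_nnnorm_le μ hs.isClosed hconv hderiv hg₀
      (fun x hx ↦ hK (mem_image_of_mem _ hx)) ht]
    simp only [eval_mul, eval_pow, eval_X, eval_C]
  have hpoly : q = X ^ finrank ℝ E * C (μ.real s) :=
    eq_of_infinite_eval_eq _ _ ((Ioi_infinite _).mono hlarge)
  simpa [hpoly] using hq 1

end ChangeOfVariables

section InnerProductSpace

variable {E : Type*} [NormedAddCommGroup E] [InnerProductSpace ℝ E] [FiniteDimensional ℝ E]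

lemma det_eq_zero_of_hasFDerivAt_of_norm_const {f : E → E} {f' : E →L[ℝ] E} {x : E} {R : ℝ}
    (hf : HasFDerivAt f f' x) (hR : R ≠ 0) (hnorm : ∀ᶠ y in 𝓝 x, ‖f y‖ = R) : f'.det = 0 := by
  by_contra hdet
  obtain ⟨h, hh : f' h = f x⟩ :=
    (LinearMap.equivOfDetNeZero (f' : E →ₗ[ℝ] E) hdet).surjective (f x)
  have hconst : HasFDerivAt (fun y ↦ ‖f y‖ ^ 2) (0 : E →L[ℝ] ℝ) x :=
    (hasFDerivAt_const (R ^ 2) x).congr_of_eventuallyEq (hnorm.mono fun y hy ↦ by simp only [hy])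
  have hinner := DFunLike.congr_fun (hf.norm_sq.unique hconst) h
  simp [hh, hnorm.self_of_nhds, hR] at hinner

theorem not_exists_contDiff_retraction_sphere {R : ℝ} (hR : 0 < R) :
    ¬∃ f : E → E, ContDiff ℝ 1 f ∧ (∀ x, f x ∈ sphere 0 R) ∧ EqOn f id (sphere 0 R) := by
  rintro ⟨f, hf, hsphere, hid⟩
  borelize E
  have hzero : ∀ x ∈ frontier (closedBall (0 : E) R), f x - x = 0 := fun x hx ↦ by
    rw [frontier_closedBall 0 hR.ne'] at hx
    exact sub_eq_zero.2 (hid hx)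
  have hdet : ∀ x, (.id ℝ E + fderiv ℝ (fun y ↦ f y - y) x : E →L[ℝ] E).det = 0 := fun x ↦ by
    have hfx : HasFDerivAt f (fderiv ℝ f x) x := (hf.differentiable one_ne_zero x).hasFDerivAt
    have hderiv : HasFDerivAt (fun y ↦ f y - y) (fderiv ℝ f x - .id ℝ E) x :=
      hfx.sub (hasFDerivAt_id x)
    rw [hderiv.fderiv, add_sub_cancel]
    exact det_eq_zero_of_hasFDerivAt_of_norm_const hfx hR.ne'
      (.of_forall fun y ↦ mem_sphere_zero_iff_norm.1 (hsphere y))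
  have hvol := setIntegral_det_id_add_fderiv_of_eq_zero_on_frontier Measure.addHaar
    (isCompact_closedBall (0 : E) R) (convex_closedBall 0 R) (hf.sub contDiff_id) hzero
  simp only [id, hdet, integral_zero] at hvol
  exact (ENNReal.toReal_pos (measure_closedBall_pos _ _ hR).ne'
    measure_closedBall_lt_top.ne).ne hvol

lemma exists_eq_zero_of_contDiff_of_eqOn_sphere {v : E → E} {R : ℝ} (hR : 0 < R)
    (hv : ContDiff ℝ 1 v) (hid : EqOn v id (sphere 0 R)) : ∃ x, v x = 0 := by
  by_contra! hne
  refine not_exists_contDiff_retraction_sphere hR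
    ⟨fun x ↦ (R * ‖v x‖⁻¹) • v x, ?_, fun x ↦ ?_, fun x hx ↦ ?_⟩
  · exact (contDiff_const.mul ((hv.norm ℝ hne).inv fun x ↦ norm_ne_zero_iff.2 (hne x))).smul hv
  · rw [mem_sphere_zero_iff_norm, norm_smul, norm_mul, norm_inv, norm_norm,
      inv_mul_cancel_right₀ (norm_ne_zero_iff.2 (hne x)), Real.norm_of_nonneg hR.le]
  · simp only [hid hx, id, mem_sphere_zero_iff_norm.1 hx, mul_inv_cancel₀ hR.ne', one_smul]

lemma exists_isFixedPt_of_contDiff_of_norm_lt {w : E → E} {r : ℝ} (hw : ContDiff ℝ 1 w)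
    (hr : ∀ x, ‖w x‖ < r) : ∃ x, IsFixedPt w x := by
  have hr₀ : 0 < r := (norm_nonneg _).trans_lt (hr 0)
  let b : ContDiffBump (0 : E) := ⟨r, 2 * r, hr₀, by linarith⟩
  obtain ⟨x, hx⟩ := exists_eq_zero_of_contDiff_of_eqOn_sphere (v := fun x ↦ x - b x • w x)
    (mul_pos two_pos hr₀) (contDiff_id.sub (b.contDiff.smul hw)) fun x hx ↦ by
      simp only [b.zero_of_le_dist (mem_sphere.1 hx).ge, zero_smul, sub_zero, id]
  rw [sub_eq_zero] at hx
  have hxr : ‖x‖ ≤ r := by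
    calc ‖x‖ = b x * ‖w x‖ := by rw [hx, norm_smul, Real.norm_of_nonneg b.nonneg, ← hx]
      _ ≤ 1 * ‖w x‖ := by gcongr; exact b.le_one
      _ ≤ r := by rw [one_mul]; exact (hr x).le
  rw [b.one_of_mem_closedBall (mem_closedBall_zero_iff.2 hxr), one_smul] at hx
  exact ⟨x, hx.symm⟩

lemma exists_isFixedPt_of_continuous_of_norm_le {φ : E → E} {r : ℝ} (hφ : Continuous φ)
    (hr : ∀ x, ‖φ x‖ ≤ r) : ∃ x, IsFixedPt φ x := by
  by_contra! hne
  have hr₀ : 0 ≤ r := (norm_nonneg _).trans (hr 0)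
  obtain ⟨x₀, -, hmin⟩ := (isCompact_closedBall (0 : E) (r + 1)).exists_isMinOn
    ⟨0, mem_closedBall_self (by positivity)⟩ (hφ.dist continuous_id).continuousOn
  have hε : 0 < min (dist (φ x₀) x₀) 1 := lt_min (dist_pos.2 (hne x₀)) one_pos
  obtain ⟨w, hw, hwφ, -⟩ := hφ.exists_contDiff_approx 1 continuous_const fun _ ↦ hε
  have hwr : ∀ x, ‖w x‖ < r + 1 := fun x ↦ by
    have hdist := (hwφ x).trans_le (min_le_right _ _)
    rw [dist_eq_norm] at hdist
    linarith [hr x, norm_le_norm_add_norm_sub' (w x) (φ x)]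
  obtain ⟨x, hx⟩ := exists_isFixedPt_of_contDiff_of_norm_lt hw hwr
  have hxr : x ∈ closedBall 0 (r + 1) := by
    rw [mem_closedBall_zero_iff, ← hx.eq]
    exact (hwr x).le
  have hclose : dist (φ x) x < dist (φ x₀) x₀ := by
    calc dist (φ x) x = dist (w x) (φ x) := by rw [dist_comm, hx.eq]
      _ < dist (φ x₀) x₀ := (hwφ x).trans_le (min_le_left _ _)
  exact hclose.not_ge (hmin hxr)

end InnerProductSpace

section FiniteDimensional

variable {V : Type*} [NormedAddCommGroup V] [NormedSpace ℝ V] [FiniteDimensional ℝ V]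

theorem exists_isFixedPt_of_isBounded_range {φ : V → V} (hφ : Continuous φ)
    (hbdd : Bornology.IsBounded (range φ)) : ∃ x, IsFixedPt φ x := by
  let e : V ≃L[ℝ] EuclideanSpace ℝ (Fin (finrank ℝ V)) := toEuclidean
  obtain ⟨r, hr⟩ := (e.lipschitz.isBounded_image hbdd).exists_norm_le
  obtain ⟨y, hy⟩ := exists_isFixedPt_of_continuous_of_norm_le (φ := e ∘ φ ∘ e.symm)
    (e.continuous.comp (hφ.comp e.symm.continuous))
    fun y ↦ hr _ (mem_image_of_mem e (mem_range_self _))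
  exact ⟨e.symm y, e.eq_symm_apply.2 hy⟩

theorem exists_isFixedPt_of_mapsTo_closedBall {φ : V → V} {a : V} {R : ℝ} (hR : 0 < R)
    (hφ : ContinuousOn φ (closedBall a R)) (hmaps : MapsTo φ (closedBall a R) (closedBall a R)) :
    ∃ x ∈ closedBall a R, IsFixedPt φ x := by
  have := Metric.instTietzeExtensionClosedBall ℝ a hR
  obtain ⟨ψ, hψ, hψφ⟩ := ContinuousMap.exists_forall_mem_restrict_eq isClosed_closedBall
    ⟨_, hφ.domRestrict⟩ (t := closedBall a R) fun x ↦ hmaps x.2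
  obtain ⟨x, hx⟩ := exists_isFixedPt_of_isBounded_range ψ.continuous
    (isBounded_closedBall.subset (range_subset_iff.2 hψ))
  have hxR : x ∈ closedBall a R := hx.eq ▸ hψ x
  have hψx : ψ x = φ x := DFunLike.congr_fun hψφ ⟨x, hxR⟩
  exact ⟨x, hxR, hψx.symm.trans hx⟩

lemma image_mem_nhds_of_hasFDerivAt_id {f : V → V} {s : Set V} {a : V} (hs : s ∈ 𝓝 a)
    (hcont : ContinuousOn f s) (hf : HasFDerivAt f (.id ℝ V) a) : f '' s ∈ 𝓝 (f a) := by
  have happrox : ∀ᶠ x in 𝓝 a, ‖f x - f a - (x - a)‖ ≤ 1 / 2 * ‖x - a‖ :=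
    hf.isLittleO.def one_half_pos
  obtain ⟨R, hR, hball⟩ := nhds_basis_closedBall.mem_iff.1 (inter_mem hs happrox)
  refine mem_of_superset (closedBall_mem_nhds _ (half_pos hR)) fun y hy ↦ ?_
  have hmaps : MapsTo (fun x ↦ x - (f x - y)) (closedBall a R) (closedBall a R) := by
    intro x hx
    have hdiff : ‖f x - f a - (x - a)‖ ≤ 1 / 2 * ‖x - a‖ := (hball hx).2
    simp only [mem_closedBall, dist_eq_norm] at hx hy ⊢
    calc ‖x - (f x - y) - a‖ = ‖(y - f a) - (f x - f a - (x - a))‖ := by congr 1; abel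
      _ ≤ ‖y - f a‖ + ‖f x - f a - (x - a)‖ := norm_sub_le _ _
      _ ≤ R := by linarith
  have hcontR : ContinuousOn f (closedBall a R) := hcont.mono fun x hx ↦ (hball hx).1
  obtain ⟨x, hx, hfix⟩ := exists_isFixedPt_of_mapsTo_closedBall hR
    (continuousOn_id.sub (hcontR.sub continuousOn_const)) hmaps
  exact ⟨x, (hball hx).1, sub_eq_zero.1 (sub_eq_self.1 hfix)⟩

theorem open_mapping_general {E : Type*} [NormedAddCommGroup E] [NormedSpace ℝ E] {F : E → V}
    {L : E →L[ℝ] V} {s : Set E} {a : E} (hs : s ∈ 𝓝 a) (hcont : ContinuousOn F s)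
    (hdiff : HasFDerivAt F L a) (hsurj : Surjective L) : F '' s ∈ 𝓝 (F a) := by
  obtain ⟨S, hS⟩ := L.exists_rightInverse_of_surjective (LinearMap.range_eq_top.2 hsurj)
  let γ : V → E := fun v ↦ a + S v
  have hγ : Continuous γ := continuous_const.add S.continuous
  have hγ₀ : γ 0 = a := by simp only [γ, map_zero, add_zero]
  have hderiv : HasFDerivAt (F ∘ γ) (.id ℝ V) 0 := by
    rw [← hS]
    exact HasFDerivAt.comp 0 (hγ₀ ▸ hdiff) (S.hasFDerivAt.const_add a)
  have himage : F ∘ γ '' (γ ⁻¹' s) ∈ 𝓝 (F (γ 0)) := image_mem_nhds_of_hasFDerivAt_id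
    (hγ.continuousAt.preimage_mem_nhds (hγ₀ ▸ hs))
    (hcont.comp hγ.continuousOn (mapsTo_preimage γ s)) hderiv
  rw [hγ₀, image_comp] at himage
  exact mem_of_superset himage (image_mono (image_preimage_subset γ s))

end FiniteDimensional

/-- Open Mapping theorem: if `F` is continuous on the closed ball `xhat + B_m(δ)` and
differentiable at `xhat` with surjective differential, then the image of the ball
contains a closed ball around `F xhat`. -/
theorem open_mapping {n m : ℕ} (hn : 0 < n) (hnm : n ≤ m)
    (xhat : EuclideanSpace ℝ (Fin m)) (δ : ℝ) (hδ : 0 < δ)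
    (F : EuclideanSpace ℝ (Fin m) → EuclideanSpace ℝ (Fin n))
    (L : EuclideanSpace ℝ (Fin m) →L[ℝ] EuclideanSpace ℝ (Fin n))
    (hcont : ContinuousOn F (closedBall xhat δ))
    (hdiff : HasFDerivWithinAt F L (closedBall xhat δ) xhat)
    (hsurj : Function.Surjective L) :
    ∃ r : ℝ, 0 < r ∧ closedBall (F xhat) r ⊆ F '' closedBall xhat δ :=
  have hball := closedBall_mem_nhds xhat hδ
  nhds_basis_closedBall.mem_iff.1
    (open_mapping_general hball hcont (hdiff.hasFDerivAt hball) hsurj)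
end

section
/- Let n be a positive integer, x̂ ∈ ℝⁿ, and let R > ρ > 0. Let φ : x̂ + B_n(R) → ℝⁿ be a continuous map that is ρ-close to the identity, i.e. |φ(x) − x| ≤ ρ for all x ∈ x̂ + B_n(R). Then φ(x̂ + B_n(R)) ⊇ x̂ + B_n(R − ρ). -/
open Set Metric

/-!
A point `y` is a value of `φ` as soon as `x ↦ y - (φ x - x)` has a fixed point, and this map sends
the ball of radius `R` into itself when `y` is at distance at most `R - ρ` from the centre. The
conclusion is therefore an instance of Brouwer's fixed point theorem.

Brouwer's theorem is reduced to the absence of a `C¹` retraction `r` of a closed ball `B` onto its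
boundary sphere, which is proved by the argument of Milnor and Rogers. Put `g = r - id`. For small
`t` the map `id + t g` is a bijection of `B`, so `∫_B det (1 + t g') = vol B`. The left-hand side is
a polynomial in `t`, so the equality also holds for `t = 1`; but `det r' = 0`, because `r` takes its
values in a sphere.
-/

open Filter Function MeasureTheory Topology
open scoped NNReal Polynomial

section LipschitzPerturbation

variable {E : Type*} [NormedAddCommGroup E] [NormedSpace ℝ E]

lemma bijective_id_add_of_lipschitzWith [CompleteSpace E] {g : E → E} {K : ℝ≥0}
    (hg : LipschitzWith K g) (hK : K < 1) : Bijective (id + g) := by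
  have happrox : ApproximatesLinearOn (id + g)
      (ContinuousLinearEquiv.refl ℝ E : E →L[ℝ] E) univ K :=
    ApproximatesLinearOn.approximatesLinearOn_iff_lipschitzOnWith.2 <| by
      convert hg.lipschitzOnWith using 1
      ext x
      simp
  have hsmall : Subsingleton E ∨ K < ‖((ContinuousLinearEquiv.refl ℝ E).symm : E →L[ℝ] E)‖₊⁻¹ := by
    rcases subsingleton_or_nontrivial E with hE | hE
    · exact Or.inl hE
    · exact Or.inr (by simpa using hK)
  exact ⟨injOn_univ.1 (happrox.injOn hsmall), happrox.surjective hsmall⟩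

lemma image_eq_of_bijective_of_eqOn_compl {α : Type*} {f : α → α} {s : Set α}
    (hf : Bijective f) (hfs : EqOn f id sᶜ) : f '' s = s := by
  rw [← compl_inj_iff, ← image_compl_eq hf, hfs.image_eq, image_id]

lemma lipschitzWith_indicator_of_eqOn_frontier [FiniteDimensional ℝ E] {F : Type*}
    [NormedAddCommGroup F] {f : E → F} {s : Set E} {K : ℝ≥0} (hs : IsClosed s)
    (hf : LipschitzOnWith K f s) (hfs : EqOn f 0 (frontier s)) :
    LipschitzWith K (s.indicator f) := by
  have hcross : ∀ x ∈ s, ∀ y ∉ s, ‖f x‖ ≤ K * dist x y := by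
    intro x hx y hy
    obtain ⟨z, hz, hdist⟩ := exists_mem_frontier_infDist_compl_eq_dist hx
      ((ne_univ_iff_exists_notMem s).2 ⟨y, hy⟩)
    calc ‖f x‖ = dist (f x) (f z) := by rw [hfs hz, Pi.zero_apply, dist_zero_right]
      _ ≤ K * dist x z := hf.dist_le_mul x hx z (hs.frontier_subset hz)
      _ ≤ K * dist x y := by
        gcongr
        exact hdist ▸ infDist_le_dist_of_mem hy
  refine LipschitzWith.of_dist_le_mul fun x y ↦ ?_
  by_cases hx : x ∈ s <;> by_cases hy : y ∈ s
  · simpa only [indicator_of_mem, hx, hy] using hf.dist_le_mul x hx y hy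
  · simpa [hx, hy] using hcross x hx y hy
  · simpa [hx, hy, dist_comm] using hcross y hy x hx
  · simp only [indicator_of_notMem, hx, hy, not_false_eq_true, dist_self]
    positivity

end LipschitzPerturbation

section Polynomial

lemma exists_polynomial_eval_eq_det_one_add_smul {ι R M : Type*} [Fintype ι] [CommRing R]
    [AddCommGroup M] [Module R M] (b : Module.Basis ι R M) (f : M →ₗ[R] M) :
    ∃ p : R[X], p.natDegree ≤ Fintype.card ι ∧ ∀ t, p.eval t = LinearMap.det (1 + t • f) := by
  classical
  let A := LinearMap.toMatrix b b f
  refine ⟨((Polynomial.X : R[X]) • A.map Polynomial.C + (1 : Matrix ι ι R).map Polynomial.C).det,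
    Polynomial.natDegree_det_X_add_C_le A 1, fun t ↦ ?_⟩
  rw [← LinearMap.det_toMatrix b, map_add, map_smul, LinearMap.toMatrix_one,
    ← Polynomial.coe_evalRingHom, RingHom.map_det]
  congr 1
  ext i j
  rcases eq_or_ne i j with rfl | hij
  · simp [A, add_comm, mul_comm t]
  · simp [A, hij, mul_comm t]

/-- By Lagrange interpolation at nodes in `T`, the value of `p x` at `t` is a linear combination of
its values at the nodes, with coefficients that do not depend on `x` and add up to `1`. -/
lemma integral_eval_eq_of_infinite {α : Type*} [MeasurableSpace α] {μ : Measure α} {p : α → ℝ[X]}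
    {d : ℕ} (hdeg : ∀ x, (p x).natDegree ≤ d) {T : Set ℝ} (hT : T.Infinite)
    (hintegrable : ∀ a ∈ T, Integrable (fun x ↦ (p x).eval a) μ) {c : ℝ}
    (hc : ∀ a ∈ T, ∫ x, (p x).eval a ∂μ = c) (t : ℝ) : ∫ x, (p x).eval t ∂μ = c := by
  obtain ⟨F, hFT, hcard⟩ := hT.exists_subset_card_eq (d + 1)
  let w : ℝ → ℝ := fun a ↦ (Lagrange.basis F id a).eval t
  have hinterp (x : α) : (p x).eval t = ∑ a ∈ F, (p x).eval a * w a := by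
    have hlt : (p x).degree < F.card := by
      rw [hcard]
      exact Polynomial.degree_le_natDegree.trans_lt (by exact_mod_cast Nat.lt_succ_of_le (hdeg x))
    conv_lhs => rw [Lagrange.eq_interpolate (injOn_id _) hlt]
    simp [Lagrange.interpolate_apply, Polynomial.eval_finsetSum, w]
  have hsum : ∑ a ∈ F, w a = 1 := by
    have hF : F.Nonempty := Finset.card_pos.1 (by lia)
    rw [← Polynomial.eval_finsetSum, Lagrange.sum_basis (injOn_id _) hF, Polynomial.eval_one]
  calc ∫ x, (p x).eval t ∂μ = ∑ a ∈ F, (∫ x, (p x).eval a ∂μ) * w a := by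
        simp_rw [hinterp]
        rw [integral_finsetSum F fun a ha ↦ (hintegrable a (hFT ha)).mul_const _]
        simp_rw [integral_mul_const]
    _ = ∑ a ∈ F, c * w a := Finset.sum_congr rfl fun a ha ↦ by rw [hc a (hFT ha)]
    _ = c := by rw [← Finset.mul_sum, hsum, mul_one]

end Polynomial

section Volume

variable {E : Type*} [NormedAddCommGroup E] [NormedSpace ℝ E]

lemma eventually_det_one_add_pos : ∀ᶠ T : E →L[ℝ] E in 𝓝 0, 0 < (1 + T).det := by
  have hcont : Continuous fun T : E →L[ℝ] E ↦ (1 + T).det :=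
    ContinuousLinearMap.continuous_det.comp (continuous_const.add continuous_id)
  have hone : (1 + 0 : E →L[ℝ] E).det = 1 := by simp [ContinuousLinearMap.det]
  exact hcont.continuousAt.eventually (lt_mem_nhds (by simp only [hone, one_pos]))

variable [FiniteDimensional ℝ E] [MeasurableSpace E] [BorelSpace E]
  (μ : Measure E) [μ.IsAddHaarMeasure] {g : E → E} {g' : E → E →L[ℝ] E} {s : Set E}

lemma setIntegral_det_one_add_of_lipschitzWith_lt_one (hs : MeasurableSet s) {K : ℝ≥0} (hK : K < 1)
    (hg : LipschitzWith K g) (hgs : EqOn g 0 sᶜ)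
    (hg' : ∀ x ∈ s, HasFDerivWithinAt g (g' x) s x) (hdet : ∀ x ∈ s, 0 < (1 + g' x).det) :
    ∫ x in s, (1 + g' x).det ∂μ = μ.real s := by
  have hbij := bijective_id_add_of_lipschitzWith hg hK
  have himage : (id + g) '' s = s :=
    image_eq_of_bijective_of_eqOn_compl hbij fun x hx ↦ by simp [hgs hx]
  have hchange := integral_image_eq_integral_abs_det_fderiv_smul μ hs
    (fun x hx ↦ (hasFDerivWithinAt_id x s).add (hg' x hx)) hbij.injective.injOn fun _ ↦ (1 : ℝ)
  rw [himage, setIntegral_one_eq_measureReal] at hchange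
  rw [hchange]
  refine setIntegral_congr_fun hs fun x hx ↦ ?_
  rw [← ContinuousLinearMap.one_def, abs_of_pos (hdet x hx), smul_eq_mul, mul_one]

lemma eventually_setIntegral_det_one_add_smul (hs : IsCompact s) {K : ℝ≥0}
    (hg : LipschitzWith K g) (hgs : EqOn g 0 sᶜ)
    (hg' : ∀ x ∈ s, HasFDerivWithinAt g (g' x) s x) (hcont : ContinuousOn g' s) :
    ∀ᶠ t : ℝ in 𝓝 0, ∫ x in s, (1 + t • g' x).det ∂μ = μ.real s := by
  obtain ⟨M, hM⟩ := hs.exists_bound_of_continuousOn hcont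
  obtain ⟨δ, hδ, hdet⟩ := Metric.eventually_nhds_iff.1 (eventually_det_one_add_pos (E := E))
  have hlip : ∀ᶠ t : ℝ in 𝓝 0, ‖t‖₊ * K < 1 :=
    (by fun_prop : Continuous fun t : ℝ ↦ ‖t‖₊ * K).continuousAt.eventually_lt_const (by simp)
  have hnorm : ∀ᶠ t : ℝ in 𝓝 0, ‖t‖ * M < δ :=
    (by fun_prop : Continuous fun t : ℝ ↦ ‖t‖ * M).continuousAt.eventually_lt_const (by simpa)
  filter_upwards [hlip, hnorm] with t ht htM
  refine setIntegral_det_one_add_of_lipschitzWith_lt_one μ hs.measurableSet ht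
    ((lipschitzWith_smul t).comp hg) (fun x hx ↦ by simp [hgs hx])
    (fun x hx ↦ (hg' x hx).const_smul t) fun x hx ↦ hdet ?_
  calc dist (t • g' x) 0 = ‖t‖ * ‖g' x‖ := by rw [dist_zero_right, norm_smul]
    _ ≤ ‖t‖ * M := by gcongr; exact hM x hx
    _ < δ := htM

theorem setIntegral_det_one_add_of_lipschitzWith (hs : IsCompact s) {K : ℝ≥0}
    (hg : LipschitzWith K g) (hgs : EqOn g 0 sᶜ)
    (hg' : ∀ x ∈ s, HasFDerivWithinAt g (g' x) s x) (hcont : ContinuousOn g' s) :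
    ∫ x in s, (1 + g' x).det ∂μ = μ.real s := by
  choose p hdeg hp using fun x ↦ exists_polynomial_eval_eq_det_one_add_smul
    (Module.finBasis ℝ E) (g' x : E →ₗ[ℝ] E)
  have heval (t : ℝ) (x : E) : (p x).eval t = (1 + t • g' x).det := hp x t
  have hintegrable (t : ℝ) : IntegrableOn (fun x ↦ (p x).eval t) s μ := by
    simp_rw [heval]
    exact (ContinuousLinearMap.continuous_det.comp_continuousOn
      (continuousOn_const.add (hcont.const_smul t))).integrableOn_compact hs
  have hsmall : {t : ℝ | ∫ x in s, (p x).eval t ∂μ = μ.real s} ∈ 𝓝 0 := by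
    simp_rw [heval]
    exact eventually_setIntegral_det_one_add_smul μ hs hg hgs hg' hcont
  simpa [heval] using integral_eval_eq_of_infinite hdeg (infinite_of_mem_nhds 0 hsmall)
    (fun t _ ↦ hintegrable t) (fun _ ht ↦ ht) 1

end Volume

section Retraction

variable {E : Type*} [NormedAddCommGroup E] [InnerProductSpace ℝ E] [FiniteDimensional ℝ E]

lemma det_fderivWithin_eq_zero_of_mapsTo_sphere {f : E → E} {s : Set E} {x c : E} {R : ℝ}
    (hR : R ≠ 0) (hx : x ∈ s) (hs : UniqueDiffWithinAt ℝ s x) (hf : DifferentiableWithinAt ℝ f s x)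
    (hmaps : MapsTo f s (sphere c R)) : (fderivWithin ℝ f s x).det = 0 := by
  have hconst : HasFDerivWithinAt (fun y ↦ ‖f y - c‖ ^ 2) (0 : E →L[ℝ] ℝ) s x :=
    (hasFDerivWithinAt_const (R ^ 2) x s).congr
      (fun y hy ↦ by rw [mem_sphere_iff_norm.1 (hmaps hy)])
      (by rw [mem_sphere_iff_norm.1 (hmaps hx)])
  have horth (v : E) : inner ℝ (f x - c) (fderivWithin ℝ f s x v) = 0 := by
    simpa [-map_sub] using
      DFunLike.congr_fun (hs.eq (hf.hasFDerivWithinAt.sub_const c).norm_sq hconst) v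
  by_contra hdet
  obtain ⟨v, hv⟩ :=
    ((fderivWithin ℝ f s x).toContinuousLinearEquivOfDetNeZero hdet).surjective (f x - c)
  have hzero : f x - c = 0 := inner_self_eq_zero (𝕜 := ℝ).1 (by simpa [← hv] using horth v)
  exact hR (by rw [← mem_sphere_iff_norm.1 (hmaps hx), hzero, norm_zero])

theorem not_eqOn_id_sphere_of_contDiffOn_closedBall {r : E → E} {c : E} {R : ℝ} (hR : 0 < R)
    (hr : ContDiffOn ℝ 1 r (closedBall c R)) (hmaps : MapsTo r (closedBall c R) (sphere c R)) :
    ¬ EqOn r id (sphere c R) := by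
  intro hid
  borelize E
  set B := closedBall c R
  let μ : Measure E := Measure.addHaar
  have hB : IsCompact B := isCompact_closedBall c R
  have hconvex : Convex ℝ B := convex_closedBall c R
  have hunique : UniqueDiffOn ℝ B := uniqueDiffOn_convex hconvex
    ⟨c, ball_subset_interior_closedBall (mem_ball_self hR)⟩
  have hdiff : DifferentiableOn ℝ r B := hr.differentiableOn one_ne_zero
  obtain ⟨K, hK⟩ := (hr.sub contDiffOn_id).exists_lipschitzOnWith one_ne_zero hconvex hB
  have hlip : LipschitzWith K (B.indicator (r - id)) :=
    lipschitzWith_indicator_of_eqOn_frontier isClosed_closedBall hK fun x hx ↦ by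
      rw [frontier_closedBall c hR.ne'] at hx
      simp [hid hx]
  have hderiv : ∀ x ∈ B,
      HasFDerivWithinAt (B.indicator (r - id)) (fderivWithin ℝ r B x - 1) B x := fun x hx ↦
    ((hdiff x hx).hasFDerivWithinAt.sub (hasFDerivWithinAt_id x B)).congr
      (fun y hy ↦ indicator_of_mem hy _) (indicator_of_mem hx _)
  have hvolume := setIntegral_det_one_add_of_lipschitzWith μ hB hlip
    (fun x hx ↦ indicator_of_notMem hx _) hderiv
    ((hr.continuousOn_fderivWithin hunique le_rfl).sub continuousOn_const)
  have hzero : ∫ x in B, (1 + (fderivWithin ℝ r B x - 1)).det ∂μ = 0 :=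
    setIntegral_eq_zero_of_forall_eq_zero fun x hx ↦ by
      rw [add_sub_cancel]
      exact det_fderivWithin_eq_zero_of_mapsTo_sphere hR.ne' hx (hunique x hx) (hdiff x hx) hmaps
  have hpos : 0 < μ.real B :=
    ENNReal.toReal_pos (measure_closedBall_pos μ c hR).ne' hB.measure_lt_top.ne
  linarith

lemma exists_isFixedPt_of_contDiff_of_hasCompactSupport_of_innerProductSpace {f : E → E}
    (hf : ContDiff ℝ 1 f) (hsupp : HasCompactSupport f) : ∃ x, IsFixedPt f x := by
  by_contra! hfix
  have hne (x : E) : x - f x ≠ 0 := sub_ne_zero.2 (Ne.symm (hfix x))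
  obtain ⟨R, hR, hball⟩ := hsupp.isBounded.subset_ball_lt 0 0
  have hf0 : ∀ x ∈ sphere (0 : E) R, f x = 0 := fun x hx ↦
    image_eq_zero_of_notMem_tsupport fun hx' ↦ (mem_ball.1 (hball hx')).ne hx
  have hg : ContDiff ℝ 1 fun x ↦ x - f x := contDiff_id.sub hf
  -- Off the support `x - f x = x`, so its radial projection fixes the sphere.
  refine not_eqOn_id_sphere_of_contDiffOn_closedBall (c := 0)
    (r := fun x ↦ (R / ‖x - f x‖) • (x - f x)) hR
    ((contDiff_const.div (hg.norm ℝ hne) fun x ↦ norm_ne_zero_iff.2 (hne x)).smul hg).contDiffOn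
    (fun x _ ↦ ?_) fun x hx ↦ ?_
  · rw [mem_sphere_zero_iff_norm, norm_smul, norm_div, norm_norm, Real.norm_of_nonneg hR.le,
      div_mul_cancel₀ _ (norm_ne_zero_iff.2 (hne x))]
  · have hxR : ‖x‖ = R := mem_sphere_zero_iff_norm.1 hx
    simp [hf0 x hx, hxR, hR.ne']

end Retraction

section Brouwer

universe u

variable {E : Type u} [NormedAddCommGroup E] [NormedSpace ℝ E] [FiniteDimensional ℝ E]

lemma exists_isFixedPt_of_contDiff_of_hasCompactSupport {f : E → E} (hf : ContDiff ℝ 1 f)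
    (hsupp : HasCompactSupport f) : ∃ x, IsFixedPt f x := by
  let e := toEuclidean (E := E)
  have hconj : ContDiff ℝ 1 (e ∘ f ∘ e.symm) := e.contDiff.comp (hf.comp e.symm.contDiff)
  have hconj_supp : HasCompactSupport (e ∘ f ∘ e.symm) :=
    (hsupp.comp_homeomorph e.symm.toHomeomorph).comp_left (map_zero e)
  obtain ⟨y, hy⟩ :=
    exists_isFixedPt_of_contDiff_of_hasCompactSupport_of_innerProductSpace hconj hconj_supp
  exact ⟨e.symm y, (e.symm_apply_eq.2 (Eq.symm hy)).symm⟩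

lemma exists_isFixedPt_of_continuous_of_hasCompactSupport {f : E → E} (hf : Continuous f)
    (hsupp : HasCompactSupport f) : ∃ x, IsFixedPt f x := by
  by_contra! hfix
  -- If `g` is closer to `f` than `id` is, then `g` has no fixed point either.
  obtain ⟨g, hg, hgf, hgsupp⟩ := hf.exists_contDiff_approx 1 (ε := fun x ↦ dist x (f x))
    (by fun_prop) fun x ↦ dist_pos.2 (Ne.symm (hfix x))
  obtain ⟨x, hx⟩ := exists_isFixedPt_of_contDiff_of_hasCompactSupport hg (hsupp.mono hgsupp)
  exact (hgf x).ne (by rw [hx.eq])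

lemma exists_isFixedPt_of_continuous_of_isBounded_range {f : E → E} (hf : Continuous f)
    (hbdd : Bornology.IsBounded (range f)) : ∃ x, IsFixedPt f x := by
  obtain ⟨M, hM, hball⟩ := hbdd.subset_closedBall_lt 0 0
  let χ : ContDiffBump (0 : E) := ⟨M, M + 1, hM, lt_add_one M⟩
  obtain ⟨x, hx⟩ := exists_isFixedPt_of_continuous_of_hasCompactSupport (f := fun x ↦ χ x • f x)
    (χ.continuous.smul hf) χ.hasCompactSupport.smul_right
  have hxM : x ∈ closedBall 0 M := by
    have hfx : ‖f x‖ ≤ M := mem_closedBall_zero_iff.1 (hball (mem_range_self x))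
    rw [mem_closedBall_zero_iff]
    calc ‖x‖ = χ x * ‖f x‖ := by
          conv_lhs => rw [← hx.eq, norm_smul, Real.norm_of_nonneg χ.nonneg]
      _ ≤ ‖f x‖ := mul_le_of_le_one_left (norm_nonneg _) χ.le_one
      _ ≤ M := hfx
  refine ⟨x, ?_⟩
  simpa only [IsFixedPt, χ.one_of_mem_closedBall hxM, one_smul] using hx

theorem exists_isFixedPt_of_isCompact_of_tietzeExtension {f : E → E} {K : Set E}
    [TietzeExtension.{u} K] (hK : IsCompact K) (hf : ContinuousOn f K) (hmaps : MapsTo f K K) :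
    ∃ x ∈ K, IsFixedPt f x := by
  obtain ⟨g, hgK, hgf⟩ := ContinuousMap.exists_forall_mem_restrict_eq hK.isClosed
    ⟨K.domRestrict f, hf.domRestrict⟩ (fun x ↦ hmaps x.2)
  have hrange : range g ⊆ K := range_subset_iff.2 hgK
  obtain ⟨x, hx⟩ :=
    exists_isFixedPt_of_continuous_of_isBounded_range g.continuous (hK.isBounded.subset hrange)
  have hxK : x ∈ K := hx.eq ▸ hgK x
  have hgx : g x = f x := DFunLike.congr_fun hgf ⟨x, hxK⟩
  exact ⟨x, hxK, hgx.symm.trans hx⟩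

theorem exists_isFixedPt_of_continuousOn_closedBall {f : E → E} {c : E} {R : ℝ} (hR : 0 ≤ R)
    (hf : ContinuousOn f (closedBall c R)) (hmaps : MapsTo f (closedBall c R) (closedBall c R)) :
    ∃ x ∈ closedBall c R, IsFixedPt f x := by
  rcases hR.eq_or_lt with rfl | hR
  · simp_all [IsFixedPt]
  · have := Metric.instTietzeExtensionClosedBall.{u} ℝ c hR
    exact exists_isFixedPt_of_isCompact_of_tietzeExtension (isCompact_closedBall c R) hf hmaps

theorem image_of_close_to_id_general {c : E} {R ρ : ℝ} (hR : 0 ≤ R) {φ : E → E}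
    (hcont : ContinuousOn φ (closedBall c R)) (hclose : ∀ x ∈ closedBall c R, ‖φ x - x‖ ≤ ρ) :
    closedBall c (R - ρ) ⊆ φ '' closedBall c R := by
  intro y hy
  have hmaps : MapsTo (fun x ↦ y - (φ x - x)) (closedBall c R) (closedBall c R) := fun x hx ↦ by
    rw [mem_closedBall_iff_norm] at hy ⊢
    calc ‖y - (φ x - x) - c‖ = ‖(y - c) - (φ x - x)‖ := by rw [sub_right_comm]
      _ ≤ ‖y - c‖ + ‖φ x - x‖ := norm_sub_le _ _
      _ ≤ (R - ρ) + ρ := add_le_add hy (hclose x hx)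
      _ = R := sub_add_cancel R ρ
  obtain ⟨x, hx, hfix⟩ := exists_isFixedPt_of_continuousOn_closedBall hR
    (continuousOn_const.sub (hcont.sub continuousOn_id)) hmaps
  refine ⟨x, hx, ?_⟩
  have hyx : y - (φ x - x) = x := hfix
  rw [sub_eq_iff_eq_add, add_sub_cancel] at hyx
  exact hyx.symm

end Brouwer

/-- If a continuous map `φ` on the closed ball of center `xhat` and radius `R` is
`ρ`-close to the identity (`0 < ρ < R`), then its image contains the closed ball
of center `xhat` and radius `R - ρ`. -/
theorem image_of_close_to_id {n : ℕ} (hn : 0 < n)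
    (xhat : EuclideanSpace ℝ (Fin n)) (R ρ : ℝ) (hρ : 0 < ρ) (hρR : ρ < R)
    (φ : EuclideanSpace ℝ (Fin n) → EuclideanSpace ℝ (Fin n))
    (hcont : ContinuousOn φ (closedBall xhat R))
    (hclose : ∀ x ∈ closedBall xhat R, ‖φ x - x‖ ≤ ρ) :
    closedBall xhat (R - ρ) ⊆ φ '' closedBall xhat R :=
  image_of_close_to_id_general (hρ.trans hρR).le hcont hclose
end
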